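/- Assume the Continuum Hypothesis. If X is a productively Lindelöf sequential topological space, then X is powerfully Lindelöf. -/

import Mathlib

open Set Cardinal Topology

universe u v

/-- A space is quasi-Lindelöf if every open cover has a countable subcover
(no separation axioms assumed). -/
def QuasiLindelofSp (X : Type u) [TopologicalSpace X] : Prop :=
  ∀ 𝒰 : Set (Set X), (∀ U ∈ 𝒰, IsOpen U) → ⋃₀ 𝒰 = Set.univ →
    ∃ 𝒱 ⊆ 𝒰, 𝒱.Countable ∧ ⋃₀ 𝒱 = Set.univ

/-- Lindelöf in the sense of Engelking: regular (T3, including T1) and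
every open cover has a countable subcover. -/
def EngLindelofSp (X : Type u) [TopologicalSpace X] : Prop :=
  RegularSpace X ∧ T1Space X ∧ QuasiLindelofSp X

/-- X is productively Lindelöf if X × Y is Lindelöf for every Lindelöf space Y. -/
def ProductivelyLindelofSp (X : Type u) [TopologicalSpace X] : Prop :=
  ∀ (Y : Type u) [TopologicalSpace Y], EngLindelofSp Y → EngLindelofSp (X × Y)

/-- X is productively quasi-Lindelöf if X × Y is quasi-Lindelöf for every Lindelöf space Y. -/
def ProductivelyQuasiLindelofSp (X : Type u) [TopologicalSpace X] : Prop :=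
  ∀ (Y : Type u) [TopologicalSpace Y], EngLindelofSp Y → QuasiLindelofSp (X × Y)

/-- X is powerfully Lindelöf if X^ω is Lindelöf. -/
def PowerfullyLindelofSp (X : Type u) [TopologicalSpace X] : Prop :=
  EngLindelofSp (ℕ → X)

/-- X is powerfully quasi-Lindelöf if X^ω is quasi-Lindelöf. -/
def PowerfullyQuasiLindelofSp (X : Type u) [TopologicalSpace X] : Prop :=
  QuasiLindelofSp (ℕ → X)

/-- Tightness of X is at most κ. -/
def TightnessLE (X : Type u) [TopologicalSpace X] (κ : Cardinal.{u}) : Prop :=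
  ∀ (A : Set X) (x : X), x ∈ closure A → ∃ B ⊆ A, #B ≤ κ ∧ x ∈ closure B

/-- X has countable tightness. -/
def CountableTightness (X : Type u) [TopologicalSpace X] : Prop :=
  ∀ (A : Set X) (x : X), x ∈ closure A → ∃ B ⊆ A, B.Countable ∧ x ∈ closure B

/-- The Lindelöf number of X is at most κ: every open cover has a subcover of size ≤ κ. -/
def LindelofNumberLE (X : Type u) [TopologicalSpace X] (κ : Cardinal.{u}) : Prop :=
  ∀ 𝒰 : Set (Set X), (∀ U ∈ 𝒰, IsOpen U) → ⋃₀ 𝒰 = Set.univ →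
    ∃ 𝒱 ⊆ 𝒰, #𝒱 ≤ κ ∧ ⋃₀ 𝒱 = Set.univ

/-- The weight of X is at most κ: there is a base of size ≤ κ. -/
def WeightLE (X : Type u) [TopologicalSpace X] (κ : Cardinal.{u}) : Prop :=
  ∃ B : Set (Set X), TopologicalSpace.IsTopologicalBasis B ∧ #B ≤ κ

/-- N is a network for X. -/
def IsNetwork (X : Type u) [TopologicalSpace X] (N : Set (Set X)) : Prop :=
  ∀ (x : X) (U : Set X), IsOpen U → x ∈ U → ∃ n ∈ N, x ∈ n ∧ n ⊆ U

/-- X is linearly Lindelöf: regular (incl. T1) and every open cover linearly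
ordered by inclusion has a countable subcover. -/
def LinearlyLindelofSp (X : Type u) [TopologicalSpace X] : Prop :=
  RegularSpace X ∧ T1Space X ∧
    ∀ 𝒰 : Set (Set X), (∀ U ∈ 𝒰, IsOpen U) → IsChain (· ⊆ ·) 𝒰 → ⋃₀ 𝒰 = Set.univ →
      ∃ 𝒱 ⊆ 𝒰, 𝒱.Countable ∧ ⋃₀ 𝒱 = Set.univ

/-- U ⊆ X^ω is a basic open set: a product of open sets, all but finitely many of
which equal X. -/
def IsBasicOpen (X : Type u) [TopologicalSpace X] (U : Set (ℕ → X)) : Prop :=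
  ∃ V : ℕ → Set X, (∀ i, IsOpen (V i)) ∧ {i | V i ≠ Set.univ}.Finite ∧
    U = Set.pi Set.univ V

/-- A family of subsets of Z is point-κ if every point belongs to at most κ members. -/
def PointLE {Z : Type u} (𝒲 : Set (Set Z)) (κ : Cardinal.{u}) : Prop :=
  ∀ z : Z, #({W ∈ 𝒲 | z ∈ W}) ≤ κ

/-- A non-empty space is zero-dimensional if it is T1 and has a base of clopen sets. -/
def ZeroDimensionalSp (Y : Type u) [TopologicalSpace Y] : Prop :=
  Nonempty Y ∧ T1Space Y ∧
    ∃ B : Set (Set Y), TopologicalSpace.IsTopologicalBasis B ∧ ∀ b ∈ B, IsClopen b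

/-!
Under CH, a productively Lindelöf subspace `E` of a power `K ^ J` of a compact metrizable space,
with `J` of size at most `𝔠`, is *Alster*: a family of `Gδ` sets catching each compact subset of `E`
in a single member has a countable subfamily covering `E`. To see this, index `J` by `ω₁`, and list
in type `ω₁` the closed sets which depend on countably many coordinates and lie in a member
of the family. If no countable part of the list covered `E`, one could choose uncountably many
points of `E` concentrated on the complement of an increasing union of approximations to `E`; that
complement together with this family is a Lindelöf space whose product with `E` is not Lindelöf. The
concentration amounts to each closed subset of the union lying in one approximation, which is proved
by Baire category at limit stages followed by a pressing-down argument.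

The countable power of an Alster set is Lindelöf, by bar induction along the tree of finite
sequences of compact subsets of it.

If `X` is productively Lindelöf of size at most `𝔠`, a cover of `X ^ ω` involves at most `𝔠`
continuous functions on `X`, hence is pulled back from the power of a subspace of `[0, 1] ^ J` as
above. For sequential `X`, sequentially closed sets are closed, so closing off under limits and
under the choice of points missed by countable subfamilies of a cover of `X ^ ω` gives a closed
subspace `Y` of size at most `𝔠` such that each countable subfamily covering `Y ^ ω` covers `X ^ ω`.
-/

/-! ### Productively Lindelöf spaces -/

theorem quasiLindelofSp_iff_lindelofSpace {X : Type u} [TopologicalSpace X] :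
    QuasiLindelofSp X ↔ LindelofSpace X := by
  constructor
  · refine fun h => ⟨isLindelof_of_countable_subcover fun {ι} U hU hcov => ?_⟩
    obtain ⟨𝒱, h𝒱, hcount, huniv⟩ := h (range U) (forall_mem_range.2 hU)
      (by rw [sUnion_range]; exact univ_subset_iff.1 hcov)
    obtain ⟨r, rfl, hinj⟩ := exists_image_eq_injOn_of_subset_range h𝒱
    exact ⟨r, countable_of_injective_of_countable_image hinj hcount,
      by rw [← sUnion_image, huniv]⟩
  · intro _ 𝒰 h𝒰 hcov
    obtain ⟨r, hr, hrcov⟩ := (isLindelof_univ (X := X)).elim_countable_subcover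
      (fun U : 𝒰 => U.1) (fun U => h𝒰 U.1 U.2) (by rw [← sUnion_eq_iUnion, hcov])
    refine ⟨Subtype.val '' r, Subtype.coe_image_subset 𝒰 r, hr.image _, ?_⟩
    rw [sUnion_image]
    exact univ_subset_iff.1 hrcov

theorem engLindelofSp_iff {X : Type u} [TopologicalSpace X] :
    EngLindelofSp X ↔ T3Space X ∧ LindelofSpace X := by
  rw [EngLindelofSp, quasiLindelofSp_iff_lindelofSpace]
  exact ⟨fun ⟨_, _, h⟩ => ⟨{}, h⟩, fun ⟨_, h⟩ => ⟨inferInstance, inferInstance, h⟩⟩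

namespace ProductivelyLindelofSp

variable {X : Type u} [TopologicalSpace X]

theorem lindelofSpace_prod (hX : ProductivelyLindelofSp X) (Z : Type u) [TopologicalSpace Z]
    [T3Space Z] [LindelofSpace Z] : LindelofSpace (X × Z) :=
  (engLindelofSp_iff.1 (hX Z (engLindelofSp_iff.2 ⟨inferInstance, inferInstance⟩))).2

theorem engLindelofSp (hX : ProductivelyLindelofSp X) : EngLindelofSp X := by
  have hPUnit : EngLindelofSp PUnit.{u + 1} := engLindelofSp_iff.2 ⟨inferInstance, inferInstance⟩
  obtain ⟨_, _⟩ := engLindelofSp_iff.1 (hX PUnit hPUnit)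
  exact engLindelofSp_iff.2 ⟨(Homeomorph.prodPUnit X).t3Space,
    .of_continuous_surjective (Homeomorph.prodPUnit X).continuous (Homeomorph.surjective _)⟩

theorem of_surjective {Y : Type u} [TopologicalSpace Y] [T3Space Y] (hX : ProductivelyLindelofSp X)
    {f : X → Y} (hf : Continuous f) (hsurj : f.Surjective) : ProductivelyLindelofSp Y := by
  intro Z _ hZ
  obtain ⟨_, _⟩ := engLindelofSp_iff.1 hZ
  have := hX.lindelofSpace_prod Z
  exact engLindelofSp_iff.2 ⟨inferInstance,
    .of_continuous_surjective (hf.prodMap continuous_id) (hsurj.prodMap Function.surjective_id)⟩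

theorem of_isClosed (hX : ProductivelyLindelofSp X) {C : Set X} (hC : IsClosed C) :
    ProductivelyLindelofSp C := by
  obtain ⟨_, _⟩ := engLindelofSp_iff.1 hX.engLindelofSp
  intro Z _ hZ
  obtain ⟨_, _⟩ := engLindelofSp_iff.1 hZ
  have := hX.lindelofSpace_prod Z
  exact engLindelofSp_iff.2 ⟨inferInstance,
    (hC.isClosedEmbedding_subtypeVal.prodMap .id).LindelofSpace⟩

theorem image {Y : Type u} [TopologicalSpace Y] [T3Space Y] {E : Set X}
    (hE : ProductivelyLindelofSp E) {f : X → Y} (hf : ContinuousOn f E) :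
    ProductivelyLindelofSp (f '' E) :=
  hE.of_surjective (hf.mapsToRestrict (mapsTo_image f E)) (surjective_mapsTo_image_restrict f E)

theorem isLindelof {E : Set X} (hE : ProductivelyLindelofSp E) : IsLindelof E :=
  isLindelof_iff_lindelofSpace.2 (engLindelofSp_iff.1 hE.engLindelofSp).2

end ProductivelyLindelofSp

theorem isLindelof_of_countable_diff {X : Type*} [TopologicalSpace X] {B Z : Set X}
    (hB : IsLindelof B) (hBZ : B ⊆ Z)
    (hZ : ∀ O, IsOpen O → B ⊆ O → (Z \ O).Countable) : IsLindelof Z := by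
  refine isLindelof_of_countable_subcover fun U hU hcov => ?_
  obtain ⟨r, hr, hBr⟩ := hB.elim_countable_subcover U hU (hBZ.trans hcov)
  obtain ⟨s, hs, hZs⟩ := (hZ _ (isOpen_biUnion fun i _ => hU i) hBr).isLindelof
    |>.elim_countable_subcover U hU (sdiff_subset.trans hcov)
  exact ⟨r ∪ s, hr.union hs, by rw [biUnion_union]; exact sdiff_subset_iff.1 hZs⟩

section Concentrated

variable {K : Type*} [TopologicalSpace K] {D : Type*} {A : Set K} {f : D → K}

/-- The graph of `f : D → K` in `K × OnePoint D`, to which the points of `A` are added at infinity.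
With `D` discrete this is the classical space witnessing that a family which is concentrated on `A`
obstructs the Lindelöf property of products. -/
def concentratedGraph (A : Set K) (f : D → K) : Set (K × OnePoint D) :=
  A ×ˢ {OnePoint.infty} ∪ range fun d => (f d, ↑d)

theorem isLindelof_concentratedGraph [TopologicalSpace D] [DiscreteTopology D]
    (hA : IsLindelof A) (hf : ∀ U, IsOpen U → A ⊆ U → {d | f d ∉ U}.Countable) :
    IsLindelof (concentratedGraph A f) := by
  refine isLindelof_of_countable_diff (B := A ×ˢ {OnePoint.infty}) ?_ subset_union_left
    fun O hO hAO => ?_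
  · rw [prod_singleton]
    exact hA.image (by fun_prop)
  have hbox : ∀ a ∈ A, ∃ W N, IsOpen W ∧ a ∈ W ∧
      {d : D | (d : OnePoint D) ∉ N}.Finite ∧ W ×ˢ N ⊆ O := by
    intro a ha
    obtain ⟨W, N, hW, hN, haW, hiN, hWN⟩ := isOpen_prod_iff.1 hO a _ (hAO ⟨ha, rfl⟩)
    exact ⟨W, N, hW, haW, isCompact_iff_finite.1 ((OnePoint.isOpen_iff_of_mem hiN).1 hN).2, hWN⟩
  choose! W N hW haW hN hWN using hbox
  obtain ⟨r, hr, hrA, hAr⟩ := hA.elim_nhds_subcover W fun a ha => (hW a ha).mem_nhds (haW a ha)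
  have hexc : ({d | f d ∉ ⋃ a ∈ r, W a} ∪ ⋃ a ∈ r, {d : D | (d : OnePoint D) ∉ N a}).Countable :=
    (hf _ (isOpen_biUnion fun a ha => hW a (hrA a ha)) hAr).union
      (hr.biUnion fun a ha => (hN a (hrA a ha)).countable)
  refine (hexc.image fun d => (f d, (d : OnePoint D))).mono ?_
  rintro _ ⟨hz | ⟨d, rfl⟩, hdO⟩
  · exact absurd (hAO hz) hdO
  refine mem_image_of_mem _ ?_
  by_contra hd
  rw [mem_union, not_or] at hd
  obtain ⟨a, ha, hda⟩ := mem_iUnion₂.1 (not_not.1 hd.1)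
  exact hdO (hWN a (hrA a ha) ⟨hda, by_contra fun h => hd.2 (mem_biUnion ha h)⟩)

end Concentrated

namespace ProductivelyLindelofSp

variable {K : Type u} [TopologicalSpace K] [T3Space K] {E : Set K}

theorem countable_of_concentrated (hE : ProductivelyLindelofSp E) {A : Set K} (hA : IsLindelof A)
    (hAE : Disjoint A E) {D : Type u} {f : D → K} (hfE : ∀ d, f d ∈ E)
    (hf : ∀ U, IsOpen U → A ⊆ U → {d | f d ∉ U}.Countable) : Countable D := by
  let _ : TopologicalSpace D := ⊥
  have : DiscreteTopology D := ⟨rfl⟩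
  let Z := concentratedGraph A f
  have : LindelofSpace Z := isLindelof_iff_lindelofSpace.1 (isLindelof_concentratedGraph hA hf)
  have := hE.lindelofSpace_prod Z
  let diag : Set (E × Z) := {p | p.1.1 = p.2.1.1}
  have hdiag : IsClosed diag := isClosed_eq (by fun_prop) (by fun_prop)
  let O : D → Set (E × Z) := fun d => (fun p => p.2.1.2) ⁻¹' {(d : OnePoint D)}
  have hO : ∀ d, IsOpen (O d) := fun d => by
    refine IsOpen.preimage (by fun_prop) ?_
    simpa using OnePoint.isOpenEmbedding_coe.isOpenMap {d} (isOpen_discrete _)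
  have hcov : diag ⊆ ⋃ d, O d := by
    rintro ⟨⟨e, he⟩, ⟨⟨k, z⟩, hz⟩⟩ (rfl : e = k)
    obtain ⟨ha, -⟩ | ⟨d, hd⟩ := hz
    · exact absurd he (hAE.notMem_of_mem_left ha)
    · exact mem_iUnion.2 ⟨d, (congrArg Prod.snd hd).symm⟩
  obtain ⟨r, hr, hrcov⟩ := hdiag.isLindelof.elim_countable_subcover O hO hcov
  refine countable_univ_iff.1 (hr.mono fun d _ => ?_)
  obtain ⟨d', hd', h⟩ := mem_iUnion₂.1
    (hrcov (show (⟨f d, hfE d⟩, ⟨(f d, ↑d), .inr ⟨d, rfl⟩⟩) ∈ diag from rfl))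
  rwa [OnePoint.coe_injective h]

theorem exists_subset_of_monotone (hE : ProductivelyLindelofSp E) {I : Type u} [LinearOrder I]
    [Uncountable I] [∀ i : I, Countable (Iio i)] {S : I → Set K} (hS : Monotone S)
    (hlind : ∀ i, IsLindelof (S i)ᶜ) (hcov : E ⊆ ⋃ i, S i)
    (hclosed : ∀ C, IsClosed C → C ⊆ ⋃ i, S i → ∃ i, C ⊆ S i) : ∃ i, E ⊆ S i := by
  by_contra! hnot
  choose x hxE hxS using fun i => not_subset.1 (hnot i)
  have hopen : ∀ U, IsOpen U → (⋃ i, S i)ᶜ ⊆ U → ∃ i, (S i)ᶜ ⊆ U := fun U hU hSU =>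
    (hclosed Uᶜ hU.isClosed_compl (compl_subset_comm.1 hSU)).imp fun _ => compl_subset_comm.1
  have hA : IsLindelof (⋃ i, S i)ᶜ := by
    refine isLindelof_of_countable_subcover fun U hU hUcov => ?_
    obtain ⟨i, hi⟩ := hopen _ (isOpen_iUnion hU) hUcov
    obtain ⟨r, hr, hrcov⟩ := (hlind i).elim_countable_subcover U hU hi
    exact ⟨r, hr, (compl_subset_compl.2 (subset_iUnion S i)).trans hrcov⟩
  refine not_countable (α := I) (hE.countable_of_concentrated hA
    (disjoint_compl_left_iff_subset.2 hcov) hxE fun U hU hSU => ?_)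
  obtain ⟨i, hi⟩ := hopen U hU hSU
  refine (to_countable (Iio i)).mono fun j hj => ?_
  by_contra! hij
  exact hxS j (hS (not_lt.1 hij) (compl_subset_comm.1 hi hj))

end ProductivelyLindelofSp

/-! ### Linear orders with countable initial segments -/

section CountableInitialSegments

open Filter

variable {I : Type*} [LinearOrder I] [∀ i : I, Countable (Iio i)]

theorem countable_Iic_of_countable_Iio (i : I) : (Iic i).Countable := by
  rw [← Iio_insert]
  exact (to_countable (Iio i)).insert i

variable [Uncountable I]

theorem exists_forall_lt_of_countable {s : Set I} (hs : s.Countable) : ∃ b, ∀ i ∈ s, i < b := by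
  have hne : ⋃ i ∈ s, Iic i ≠ Set.univ := fun h =>
    not_countable_univ (h ▸ hs.biUnion fun i _ => countable_Iic_of_countable_Iio i)
  obtain ⟨b, hb⟩ := (ne_univ_iff_exists_notMem _).1 hne
  exact ⟨b, fun i hi => lt_of_not_ge fun hbi => hb (mem_biUnion hi hbi)⟩

theorem noMaxOrder_of_countable_Iio : NoMaxOrder I :=
  ⟨fun a => (exists_forall_lt_of_countable (countable_singleton a)).imp fun _ h => h a rfl⟩

theorem countableInterFilter_atTop_of_countable_Iio : CountableInterFilter (atTop : Filter I) := by
  refine ⟨fun S hS hmem => ?_⟩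
  choose! b hb using fun s hs => mem_atTop_sets.1 (hmem s hs)
  obtain ⟨c, hc⟩ := exists_forall_lt_of_countable (hS.image b)
  exact mem_atTop_sets.2 ⟨c, fun i hi s hs =>
    hb s hs i ((hc _ (mem_image_of_mem b hs)).le.trans hi)⟩

attribute [local instance] noMaxOrder_of_countable_Iio countableInterFilter_atTop_of_countable_Iio

theorem eventually_subset_of_iInter_subset_isGδ {X : Type*} [TopologicalSpace X] [CompactSpace X]
    {P : I → Set X} (hP : Antitone P) (hclosed : ∀ i, IsClosed (P i)) {G : Set X} (hG : IsGδ G)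
    (hPG : ⋂ i, P i ⊆ G) : ∀ᶠ i in atTop, P i ⊆ G := by
  obtain ⟨U, hU, rfl⟩ := isGδ_iff_eq_iInter_nat.1 hG
  simp only [subset_iInter_iff, eventually_countable_forall] at hPG ⊢
  intro n
  obtain ⟨i, hi⟩ := exists_subset_nhds_of_compactSpace hP.directed_ge hclosed
    fun x hx => (hU n).mem_nhds (hPG n hx)
  exact eventually_atTop.2 ⟨i, fun j hij => (hP hij).trans hi⟩

variable [WellFoundedLT I]

theorem exists_gt_forall_lt_map_lt (g : I → I) (a : I) : ∃ γ > a, ∀ α < γ, g α < γ := by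
  choose h hh using fun c : I =>
    exists_forall_lt_of_countable ((countable_Iic_of_countable_Iio c).image g)
  let s : ℕ → I := fun n => h^[n] a
  let B : Set I := {b | ∀ n, s n < b}
  have hB : B.Nonempty :=
    (exists_forall_lt_of_countable (countable_range s)).imp fun b hb n => hb _ ⟨n, rfl⟩
  refine ⟨wellFounded_lt.min B hB, wellFounded_lt.min_mem B hB 0, fun α hα => ?_⟩
  obtain ⟨n, hn⟩ : ∃ n, α ≤ s n := by
    by_contra! hs
    exact wellFounded_lt.not_lt_min B hs hα
  calc g α < h (s n) := hh (s n) (g α) ⟨α, hn, rfl⟩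
    _ = s (n + 1) := (Function.iterate_succ_apply' h n a).symm
    _ < _ := wellFounded_lt.min_mem B hB (n + 1)

theorem exists_frequently_of_forall_exists_lt {β : Type*} {𝓑 : I → Set β}
    (h𝓑 : ∀ α, (𝓑 α).Countable) (g : I → I) {R : I → β → Prop}
    (hR : ∀ γ, (Iio γ).Nonempty → (∀ α < γ, g α < γ) → ∃ α < γ, ∃ V ∈ 𝓑 α, R γ V) :
    ∃ V, ∃ᶠ γ in atTop, R γ V := by
  by_contra! hV
  have hbound : ∀ α, ∀ᶠ γ in atTop, ∀ V ∈ 𝓑 α, ¬R γ V := fun α =>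
    (eventually_countable_ball (h𝓑 α)).2 fun V _ => hV V
  choose h hh using fun α => eventually_atTop.1 (hbound α)
  obtain ⟨γ, hγ, hclosed⟩ := exists_gt_forall_lt_map_lt (fun α => max (g α) (h α))
    (Classical.arbitrary I)
  obtain ⟨α, hα, V, hVα, hRV⟩ :=
    hR γ ⟨_, hγ⟩ fun α hα => (le_max_left _ _).trans_lt (hclosed α hα)
  exact hh α γ ((le_max_right _ _).trans (hclosed α hα).le) V hVα hRV

end CountableInitialSegments

theorem isLindelof_preimage_of_isProperMap {X Y : Type*} [TopologicalSpace X] [TopologicalSpace Y]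
    {f : X → Y} (hf : IsProperMap f) {B : Set Y} (hB : IsLindelof B) : IsLindelof (f ⁻¹' B) := by
  intro F _ _ hF
  obtain ⟨y, hyB, hy⟩ := hB (f := F.map f) (Filter.map_le_iff_le_comap.2 (by simpa using hF))
  obtain ⟨x, rfl, hx⟩ := hf.clusterPt_of_mapClusterPt hy
  exact ⟨x, hyB, hx⟩

theorem mk_setOf_isClosed_le_continuum (X : Type*) [TopologicalSpace X]
    [SecondCountableTopology X] : #{C : Set X | IsClosed C} ≤ 𝔠 := by
  let 𝓑 := TopologicalSpace.countableBasis X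
  let f : {C : Set X | IsClosed C} → Set 𝓑 := fun C => {b | b.1 ⊆ C.1ᶜ}
  have hf : f.Injective := by
    intro C C' h
    have hbasis : ∀ C : {C : Set X | IsClosed C}, C.1ᶜ = ⋃ b ∈ f C, b.1 := fun C => by
      rw [(TopologicalSpace.isBasis_countableBasis X).open_eq_sUnion' C.2.isOpen_compl]
      ext x
      simp [f, 𝓑, and_assoc, and_left_comm]
    exact Subtype.ext (compl_injective (by rw [hbasis C, hbasis C', h]))
  calc #{C : Set X | IsClosed C} ≤ #(Set 𝓑) := mk_le_of_injective hf
    _ = 2 ^ #𝓑 := mk_set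
    _ ≤ 2 ^ ℵ₀ := power_le_power_left two_ne_zero
      (TopologicalSpace.countable_countableBasis X).le_aleph0

theorem exists_isOpen_closure_inter_subset {X ι : Type*} [TopologicalSpace X] [CompactSpace X]
    [T2Space X] [Countable ι] {Q : Set X} (hQ : Q.Nonempty) {F : ι → Set X}
    (hF : ∀ i, IsClosed (F i)) (hcov : closure Q ⊆ ⋃ i, F i) :
    ∃ i O, IsOpen O ∧ (O ∩ Q).Nonempty ∧ closure (O ∩ Q) ⊆ F i := by
  have := isCompact_iff_compactSpace.1 (isClosed_closure (s := Q)).isCompact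
  have := hQ.closure.to_subtype
  obtain ⟨i, p, hp⟩ := nonempty_interior_of_iUnion_of_closed
    (f := fun i => (Subtype.val : closure Q → X) ⁻¹' F i)
    (fun i => (hF i).preimage continuous_subtype_val)
    (by rw [← preimage_iUnion, preimage_val_eq_univ_of_subset hcov])
  obtain ⟨_, hOF, ⟨O, hO, rfl⟩, hpO⟩ := mem_interior.1 hp
  exact ⟨i, O, hO, mem_closure_iff.1 p.2 O hO hpO,
    closure_minimal (fun x hx => @hOF ⟨x, subset_closure hx.2⟩ hx.1) (hF i)⟩

theorem exists_isOpen_closure_inter_subset_of_isSigmaCompact {X : Type*} [TopologicalSpace X]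
    [CompactSpace X] [T2Space X] {Q S T : Set X} (hQ : Q.Nonempty) (hS : IsSigmaCompact S)
    (hT : IsSigmaCompact T) (hcov : closure Q ⊆ S ∪ T) (hQS : Disjoint Q S) :
    ∃ O, IsOpen O ∧ (O ∩ Q).Nonempty ∧ closure (O ∩ Q) ⊆ T := by
  obtain ⟨s, hs, rfl⟩ := hS
  obtain ⟨t, ht, rfl⟩ := hT
  obtain ⟨n | n, O, hO, hne, hsub⟩ := exists_isOpen_closure_inter_subset hQ
    (F := Sum.elim s t) (Sum.rec (fun n => (hs n).isClosed) fun n => (ht n).isClosed)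
    (by rwa [iUnion_sumElim])
  · obtain ⟨x, hx⟩ := hne
    exact absurd (mem_iUnion.2 ⟨n, hsub (subset_closure hx)⟩) (hQS.notMem_of_mem_left hx.2)
  · exact ⟨O, hO, hne, hsub.trans (subset_iUnion t n)⟩

/-! ### Cylinders in powers -/

theorem isOpenMap_domRestrict {ι : Type*} {π : ι → Type*} [∀ i, TopologicalSpace (π i)]
    (s : Set ι) : IsOpenMap (s.domRestrict (π := π)) := by
  classical
  exact isOpenMap_fst.comp (Homeomorph.piEquivPiSubtypeProd (· ∈ s) π).isOpenMap

/-- `IsCylinder s A` says that `A` is a cylinder over the set `s` of coordinates, that is, the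
preimage of a set under the restriction of points to `s`. -/
def IsCylinder {ι K : Type*} (s : Set ι) (A : Set (ι → K)) : Prop :=
  DependsOn (· ∈ A) s

/-- The smallest cylinder over `s` which contains `A`. -/
def cylinderHull {ι K : Type*} (s : Set ι) (A : Set (ι → K)) : Set (ι → K) :=
  s.domRestrict ⁻¹' (s.domRestrict '' A)

section Cylinder

variable {ι K : Type*} {s t : Set ι} {A B : Set (ι → K)}

theorem mem_cylinderHull {x : ι → K} : x ∈ cylinderHull s A ↔ ∃ y ∈ A, EqOn y x s := by
  simp [cylinderHull, funext_iff, EqOn]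

theorem subset_cylinderHull : A ⊆ cylinderHull s A :=
  subset_preimage_image _ _

theorem cylinderHull_anti (hst : s ⊆ t) (A : Set (ι → K)) : cylinderHull t A ⊆ cylinderHull s A :=
  fun _ hx => mem_cylinderHull.2 ((mem_cylinderHull.1 hx).imp fun _ h => ⟨h.1, h.2.mono hst⟩)

theorem isCylinder_preimage_domRestrict (s : Set ι) (B : Set (s → K)) :
    IsCylinder s (s.domRestrict ⁻¹' B) := fun _ _ h =>
  congrArg (· ∈ B) (s.dependsOn_domRestrict h)

theorem isCylinder_cylinderHull (s : Set ι) (A : Set (ι → K)) : IsCylinder s (cylinderHull s A) :=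
  isCylinder_preimage_domRestrict s _

namespace IsCylinder

theorem mem_iff (hA : IsCylinder s A) {x y : ι → K} (h : EqOn x y s) : x ∈ A ↔ y ∈ A :=
  iff_of_eq (hA fun _ hi => h hi)

theorem cylinderHull_subset (hB : IsCylinder s B) (h : A ⊆ B) : cylinderHull s A ⊆ B := by
  intro x hx
  obtain ⟨y, hy, hyx⟩ := mem_cylinderHull.1 hx
  exact (hB.mem_iff hyx).1 (h hy)

theorem cylinderHull_eq (hA : IsCylinder s A) : cylinderHull s A = A :=
  (hA.cylinderHull_subset Subset.rfl).antisymm subset_cylinderHull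

protected theorem mono (hA : IsCylinder s A) (hst : s ⊆ t) : IsCylinder t A :=
  DependsOn.mono hst hA

protected theorem compl (hA : IsCylinder s A) : IsCylinder s Aᶜ :=
  fun _ _ h => congrArg Not (hA h)

protected theorem inter (hA : IsCylinder s A) (hB : IsCylinder s B) : IsCylinder s (A ∩ B) :=
  fun _ _ h => congrArg₂ And (hA h) (hB h)

protected theorem diff (hA : IsCylinder s A) (hB : IsCylinder s B) : IsCylinder s (A \ B) :=
  hA.inter hB.compl

protected theorem biUnion {κ : Type*} {r : Set κ} {F : κ → Set (ι → K)}
    (hF : ∀ j ∈ r, IsCylinder s (F j)) : IsCylinder s (⋃ j ∈ r, F j) := fun x y h => by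
  simp only [mem_iUnion]
  exact propext (exists₂_congr fun j hj => (hF j hj).mem_iff h)

protected theorem closure [TopologicalSpace K] (hA : IsCylinder s A) :
    IsCylinder s (closure A) := by
  rw [← hA.cylinderHull_eq, cylinderHull, ←
    (isOpenMap_domRestrict s).preimage_closure_eq_closure_preimage (by fun_prop)]
  exact isCylinder_preimage_domRestrict s _

theorem cylinderHull_inter_subset {O Q T : Set (ι → K)} (hQ : IsCylinder s Q)
    (hT : IsCylinder s T) (h : O ∩ Q ⊆ T) : cylinderHull s O ∩ Q ⊆ T := by
  rintro x ⟨hxO, hxQ⟩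
  obtain ⟨y, hyO, hyx⟩ := mem_cylinderHull.1 hxO
  exact (hT.mem_iff hyx).1 (h ⟨hyO, (hQ.mem_iff hyx).2 hxQ⟩)

theorem isLindelof [TopologicalSpace K] [CompactSpace K] [T2Space K] [SecondCountableTopology K]
    (hA : IsCylinder s A) (hs : s.Countable) : IsLindelof A := by
  have := hs.to_subtype
  rw [← hA.cylinderHull_eq]
  have hproper : IsProperMap (s.domRestrict (π := fun _ => K)) :=
    Continuous.isProperMap (by fun_prop)
  exact isLindelof_preimage_of_isProperMap hproper (HereditarilyLindelofSpace.isLindelof _)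

end IsCylinder

theorem exists_countable_cylinderHull_singleton_subset [TopologicalSpace K] {x : ι → K}
    {G : Set (ι → K)} (hG : IsGδ G) (hx : x ∈ G) :
    ∃ r : Set ι, r.Countable ∧ cylinderHull r {x} ⊆ G := by
  obtain ⟨U, hU, rfl⟩ := isGδ_iff_eq_iInter_nat.1 hG
  choose F u hxu hu using fun n => isOpen_pi_iff.1 (hU n) x (mem_iInter.1 hx n)
  refine ⟨⋃ n, F n, countable_iUnion fun n => (F n).countable_toSet, fun y hy => ?_⟩
  obtain ⟨_, rfl, hxy⟩ := mem_cylinderHull.1 hy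
  refine mem_iInter.2 fun n => hu n fun i hi => ?_
  rw [← hxy (mem_iUnion_of_mem n hi)]
  exact (hxu n i hi).2

theorem exists_countable_notMem_cylinderHull [TopologicalSpace K] [T1Space K] {E : Set (ι → K)}
    (hE : IsLindelof E) {k : ι → K} (hk : k ∉ E) :
    ∃ r : Set ι, r.Countable ∧ k ∉ cylinderHull r E := by
  obtain ⟨r, hr, hEr⟩ := hE.elim_countable_subcover (fun i => {y : ι → K | y i ≠ k i})
    (fun i => isOpen_compl_singleton.preimage (continuous_apply i)) fun y hy =>
      mem_iUnion.2 (Function.ne_iff.1 (ne_of_mem_of_not_mem hy hk))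
  refine ⟨r, hr, fun hkr => ?_⟩
  obtain ⟨y, hy, hyk⟩ := mem_cylinderHull.1 hkr
  obtain ⟨i, hi, hne⟩ := mem_iUnion₂.1 (hEr hy)
  exact hne (hyk hi)

theorem exists_countable_cylinder_localization [TopologicalSpace K] [SecondCountableTopology K]
    {I : Type*} [LinearOrder I] [∀ i : I, Countable (Iio i)] :
    ∃ 𝓑 : I → Set (Set (I → K)), (∀ α, (𝓑 α).Countable) ∧ (∀ α, ∀ V ∈ 𝓑 α, IsCylinder (Iic α) V) ∧
      ∀ γ : I, (Iio γ).Nonempty → ∀ O, IsOpen O → ∀ q ∈ O,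
        ∃ α < γ, ∃ V ∈ 𝓑 α, q ∈ V ∧ V ⊆ cylinderHull (Iio γ) O := by
  have := fun α : I => (countable_Iic_of_countable_Iio α).to_subtype
  refine ⟨fun α => preimage (Iic α).domRestrict '' TopologicalSpace.countableBasis (Iic α → K),
    fun α => (TopologicalSpace.countable_countableBasis _).image _,
    fun α => forall_mem_image.2 fun b _ => isCylinder_preimage_domRestrict _ b,
    fun γ hγ O hO q hq => ?_⟩
  have := hγ.to_subtype
  obtain ⟨F, u, hqu, hu⟩ := isOpen_pi_iff.1 (isOpenMap_domRestrict (Iio γ) O hO)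
    _ (mem_image_of_mem _ hq)
  obtain ⟨⟨α, hα⟩, hFα⟩ := F.exists_le
  let W : Set (Iic α → K) := ⋂ i : F, {z | z ⟨i.1, hFα i.1 i.2⟩ ∈ u i}
  have hW : IsOpen W := isOpen_iInter_of_finite fun i =>
    (hqu i.1 i.2).1.preimage (continuous_apply _)
  obtain ⟨b, hb, hqb, hbW⟩ := (TopologicalSpace.isBasis_countableBasis _).exists_subset_of_mem_open
    (show (Iic α).domRestrict q ∈ W from mem_iInter.2 fun i => (hqu i.1 i.2).2) hW
  exact ⟨α, hα, _, mem_image_of_mem _ hb, hqb, fun x hx =>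
    hu fun i hi => mem_iInter.1 (hbW hx) ⟨i, hi⟩⟩

section Compact

variable [TopologicalSpace K] [CompactSpace K]

theorem isClosed_cylinderHull (hA : IsClosed A) : IsClosed (cylinderHull s A) :=
  (isClosedMap_restrict_of_compactSpace A hA).preimage (by fun_prop)

theorem isSigmaCompact_cylinderHull [T2Space K] (hA : IsSigmaCompact (s.domRestrict '' A)) :
    IsSigmaCompact (cylinderHull s A) := by
  obtain ⟨C, hC, hCA⟩ := hA
  rw [cylinderHull, ← hCA, preimage_iUnion]
  exact isSigmaCompact_iUnion_of_isCompact _ fun n =>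
    ((hC n).isClosed.preimage (by fun_prop)).isCompact

theorem mk_setOf_isClosed_isCylinder_le_continuum [SecondCountableTopology K] (hs : s.Countable) :
    #{A : Set (ι → K) | IsClosed A ∧ IsCylinder s A} ≤ 𝔠 := by
  have := hs.to_subtype
  let f : {A : Set (ι → K) | IsClosed A ∧ IsCylinder s A} → {C : Set (s → K) | IsClosed C} :=
    fun A => ⟨s.domRestrict (π := fun _ => K) '' A.1,
      isClosedMap_restrict_of_compactSpace A.1 A.2.1⟩
  have hf : f.Injective := fun A B h => Subtype.ext <| by
    have hAB : s.domRestrict '' A.1 = s.domRestrict '' B.1 := congrArg Subtype.val h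
    rw [← A.2.2.cylinderHull_eq, ← B.2.2.cylinderHull_eq, cylinderHull, hAB, cylinderHull]
  exact (mk_le_of_injective hf).trans (mk_setOf_isClosed_le_continuum _)

end Compact

end Cylinder

theorem exists_surjective_of_mk_le {α β : Type u} [Nonempty β] (h : #β ≤ #α) :
    ∃ f : α → β, f.Surjective := by
  obtain ⟨g⟩ := h
  exact ⟨Function.invFun g, Function.invFun_surjective g.injective⟩

theorem ProductivelyLindelofSp.isSigmaCompact {I : Type u} [LinearOrder I]
    [∀ i : I, Countable (Iio i)] (hI : 𝔠 ≤ #I) {L : Type u} [TopologicalSpace L] [CompactSpace L]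
    [T2Space L] [SecondCountableTopology L] {E : Set L} (hE : ProductivelyLindelofSp E) :
    IsSigmaCompact E := by
  have : Uncountable I := aleph0_lt_mk_iff.1 (aleph0_lt_continuum.trans_le hI)
  let 𝓕 := {C : Set L | IsClosed C ∧ C ⊆ E}
  have : Nonempty 𝓕 := ⟨⟨∅, isClosed_empty, empty_subset E⟩⟩
  have hcard : #𝓕 ≤ #I :=
    (mk_le_mk_of_subset fun _ h => h.1).trans ((mk_setOf_isClosed_le_continuum L).trans hI)
  obtain ⟨e, he⟩ := exists_surjective_of_mk_le hcard
  let S : I → Set L := accumulate fun i => (e i).1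
  have hSE : ∀ i, S i ⊆ E := fun i => iUnion₂_subset fun j _ => (e j).2.2
  have hmem : ∀ C ∈ 𝓕, ∃ i, C ⊆ S i := fun C hC => by
    obtain ⟨i, hi⟩ := he ⟨C, hC⟩
    exact ⟨i, (congrArg Subtype.val hi).ge.trans (subset_accumulate (s := fun i => (e i).1))⟩
  obtain ⟨i, hi⟩ := hE.exists_subset_of_monotone (S := S) monotone_accumulate
    (fun i => HereditarilyLindelofSpace.isLindelof _)
    (fun x hx => by
      obtain ⟨i, hi⟩ := hmem {x} ⟨isClosed_singleton, singleton_subset_iff.2 hx⟩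
      exact mem_iUnion.2 ⟨i, hi rfl⟩)
    fun C hC hCS => hmem C ⟨hC, hCS.trans (iUnion_subset hSE)⟩
  rw [hi.antisymm (hSE i)]
  exact isSigmaCompact_biUnion (countable_Iic_of_countable_Iio i)
    fun j _ => (e j).2.1.isCompact.isSigmaCompact

section HullStage

variable {I K : Type*} [LinearOrder I]

/-- The union of the first `δ` members of a sequence `e`, the `α`-th of which is cut down to the
cylinder hull of `E` over the coordinates below `α`. -/
def hullStage (e : I → Set (I → K)) (E : Set (I → K)) (δ : I) : Set (I → K) :=
  ⋃ α ∈ Iio δ, e α ∩ cylinderHull (Iio α) E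

variable {e : I → Set (I → K)} {E : Set (I → K)}

theorem hullStage_mono : Monotone (hullStage e E) := fun _ _ h =>
  biUnion_subset_biUnion_left (Iio_subset_Iio h)

theorem isCylinder_hullStage {γ δ : I} (hδ : δ ≤ γ) (he : ∀ α < δ, IsCylinder (Iio γ) (e α)) :
    IsCylinder (Iio γ) (hullStage e E δ) :=
  .biUnion fun α hα => (he α hα).inter
    ((isCylinder_cylinderHull _ E).mono (Iio_subset_Iio (hα.le.trans hδ)))

theorem cylinderHull_subset_hullStage_union {C : Set (I → K)} (hC : C ⊆ ⋃ δ, hullStage e E δ)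
    {γ : I} (he : ∀ α < γ, IsCylinder (Iio γ) (e α)) :
    cylinderHull (Iio γ) C ⊆ hullStage e E γ ∪ cylinderHull (Iio γ) E := by
  intro x hx
  obtain ⟨y, hyC, hyx⟩ := mem_cylinderHull.1 hx
  obtain ⟨δ, hδ⟩ := mem_iUnion.1 (hC hyC)
  obtain ⟨α, -, hyα⟩ := mem_iUnion₂.1 hδ
  rcases lt_or_ge α γ with hα | hα
  · exact .inl (((isCylinder_hullStage le_rfl he).mem_iff hyx).1 (mem_biUnion hα hyα))
  · exact .inr (((isCylinder_cylinderHull _ E).mem_iff hyx).1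
      (cylinderHull_anti (Iio_subset_Iio hα) E hyα.2))

variable [∀ i : I, Countable (Iio i)]

theorem exists_isCylinder_hullStage [Uncountable I] (he : ∀ α, ∃ γ, IsCylinder (Iio γ) (e α))
    (δ : I) : ∃ γ, IsCylinder (Iio γ) (hullStage e E δ) := by
  choose g hg using he
  obtain ⟨b, hb⟩ := exists_forall_lt_of_countable ((to_countable (Iio δ)).image g)
  refine ⟨max δ b, isCylinder_hullStage (le_max_left δ b) fun α hα => (hg α).mono ?_⟩
  exact Iio_subset_Iio ((hb _ (mem_image_of_mem g hα)).le.trans (le_max_right δ b))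

variable [TopologicalSpace K]

theorem isSigmaCompact_hullStage (hE : ∀ i, IsSigmaCompact (cylinderHull (Iio i) E))
    (he : ∀ α, IsClosed (e α)) (δ : I) : IsSigmaCompact (hullStage e E δ) :=
  isSigmaCompact_biUnion (to_countable (Iio δ)) fun α _ => by
    obtain ⟨C, hC, hCE⟩ := hE α
    rw [← hCE, inter_iUnion]
    exact isSigmaCompact_iUnion_of_isCompact _ fun n => (hC n).inter_left (he α)

attribute [local instance] noMaxOrder_of_countable_Iio countableInterFilter_atTop_of_countable_Iio

open Filter

theorem iInter_subset_of_frequently_subset_cylinderHull [T1Space K] [Uncountable I]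
    (hE : IsLindelof E) {P : I → Set (I → K)}
    (hP : ∃ᶠ γ in atTop, P γ ⊆ cylinderHull (Iio γ) E) : ⋂ γ, P γ ⊆ E := by
  intro k hk
  by_contra hkE
  obtain ⟨r, hr, hkr⟩ := exists_countable_notMem_cylinderHull hE hkE
  obtain ⟨b, hb⟩ := exists_forall_lt_of_countable hr
  obtain ⟨γ, hPγ, hbγ⟩ := (hP.and_eventually (eventually_ge_atTop b)).exists
  exact hkr (cylinderHull_anti (fun i hi => (hb i hi).trans_le hbγ) E (hPγ (mem_iInter.1 hk γ)))

variable [CompactSpace K] [T2Space K]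

theorem exists_closure_inter_subset_cylinderHull
    (hE : ∀ i, IsSigmaCompact (cylinderHull (Iio i) E)) (he : ∀ α, IsClosed (e α))
    {C : Set (I → K)} (hC : IsClosed C) (hCe : C ⊆ ⋃ δ, hullStage e E δ) {γ : I}
    (hCγ : ¬C ⊆ hullStage e E γ) (heγ : ∀ α < γ, IsCylinder (Iio γ) (e α)) :
    ∃ O, IsOpen O ∧ (O ∩ (cylinderHull (Iio γ) C \ hullStage e E γ)).Nonempty ∧
      closure (cylinderHull (Iio γ) O ∩ (cylinderHull (Iio γ) C \ hullStage e E γ)) ⊆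
        cylinderHull (Iio γ) E := by
  set Q := cylinderHull (Iio γ) C \ hullStage e E γ
  have hQcyl : IsCylinder (Iio γ) Q :=
    (isCylinder_cylinderHull _ C).diff (isCylinder_hullStage le_rfl heγ)
  have hQne : Q.Nonempty :=
    (nonempty_of_not_subset hCγ).mono (sdiff_subset_sdiff_left subset_cylinderHull)
  have hQcov : closure Q ⊆ hullStage e E γ ∪ cylinderHull (Iio γ) E :=
    (closure_minimal sdiff_subset (isClosed_cylinderHull hC)).trans
      (cylinderHull_subset_hullStage_union hCe heγ)
  obtain ⟨O, hO, hne, hsub⟩ := exists_isOpen_closure_inter_subset_of_isSigmaCompact hQne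
    (isSigmaCompact_hullStage hE he γ) (hE γ) hQcov disjoint_sdiff_left
  refine ⟨O, hO, hne, (closure_minimal ?_ (isClosed_cylinderHull isClosed_closure)).trans
    ((isCylinder_cylinderHull _ E).cylinderHull_subset hsub)⟩
  exact hQcyl.cylinderHull_inter_subset (isCylinder_cylinderHull _ _)
    (subset_closure.trans subset_cylinderHull)

theorem exists_subset_hullStage_of_isClosed [SecondCountableTopology K] [Uncountable I]
    [WellFoundedLT I] (hEL : IsLindelof E) (hE : ∀ i, IsSigmaCompact (cylinderHull (Iio i) E))
    (hclosed : ∀ α, IsClosed (e α)) (hcyl : ∀ α, ∃ γ, IsCylinder (Iio γ) (e α))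
    (hcatch : ∀ P : I → Set (I → K), Antitone P → (∀ i, IsClosed (P i)) →
      (∀ i, ∃ γ, IsCylinder (Iio γ) (P i)) → ⋂ i, P i ⊆ E → ∃ i, P i ∈ range e)
    {C : Set (I → K)} (hC : IsClosed C) (hCe : C ⊆ ⋃ δ, hullStage e E δ) :
    ∃ δ, C ⊆ hullStage e E δ := by
  by_contra! hCδ
  let Q : I → Set (I → K) := fun γ => cylinderHull (Iio γ) C \ hullStage e E γ
  have hQ : Antitone Q := fun γ δ h =>
    sdiff_subset_sdiff (cylinderHull_anti (Iio_subset_Iio h) C) (hullStage_mono h)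
  obtain ⟨𝓑, h𝓑count, h𝓑cyl, h𝓑⟩ := exists_countable_cylinder_localization (I := I) (K := K)
  choose g hg using hcyl
  obtain ⟨V, hV⟩ := exists_frequently_of_forall_exists_lt h𝓑count g
    (R := fun γ V => (∃ b, IsCylinder (Iic b) V) ∧ (V ∩ Q γ).Nonempty ∧
      closure (V ∩ Q γ) ⊆ cylinderHull (Iio γ) E) fun γ hγ hgγ => by
    obtain ⟨O, hO, ⟨q, hqO, hqQ⟩, hsub⟩ := exists_closure_inter_subset_cylinderHull hE hclosed hC
      hCe (hCδ γ) fun α hα => (hg α).mono (Iio_subset_Iio (hgγ α hα).le)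
    obtain ⟨α, hα, V, hV, hqV, hVO⟩ := h𝓑 γ hγ O hO q hqO
    exact ⟨α, hα, V, hV, ⟨α, h𝓑cyl α V hV⟩, ⟨q, hqV, hqQ⟩,
      (closure_mono (inter_subset_inter_left _ hVO)).trans hsub⟩
  obtain ⟨-, ⟨b, hb⟩, -⟩ := hV.exists
  have hPcyl : ∀ i, ∃ γ, IsCylinder (Iio γ) (closure (V ∩ Q i)) := fun i => by
    obtain ⟨γ, hγ⟩ := exists_isCylinder_hullStage (E := E) (fun α => ⟨g α, hg α⟩) i
    obtain ⟨c, hc⟩ := exists_gt (max b (max i γ))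
    simp only [max_lt_iff] at hc
    refine ⟨c, ((hb.mono (Iic_subset_Iio.2 hc.1)).inter (.diff ?_ ?_)).closure⟩
    · exact (isCylinder_cylinderHull _ C).mono (Iio_subset_Iio hc.2.1.le)
    · exact hγ.mono (Iio_subset_Iio hc.2.2.le)
  obtain ⟨i, β, hβ⟩ := hcatch (fun γ => closure (V ∩ Q γ))
    (fun γ δ h => closure_mono (inter_subset_inter_right V (hQ h))) (fun γ => isClosed_closure)
    hPcyl (iInter_subset_of_frequently_subset_cylinderHull hEL (hV.mono fun γ h => h.2.2))
  obtain ⟨γ, ⟨-, ⟨q, hqV, hqQ⟩, hγE⟩, hγ⟩ :=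
    (hV.and_eventually ((eventually_ge_atTop i).and (eventually_gt_atTop β))).exists
  have hqe : q ∈ e β := hβ ▸ subset_closure ⟨hqV, hQ hγ.1 hqQ⟩
  have hqE : q ∈ cylinderHull (Iio β) E :=
    cylinderHull_anti (Iio_subset_Iio hγ.2.le) E (hγE (subset_closure ⟨hqV, hqQ⟩))
  exact hqQ.2 (mem_biUnion hγ.2 ⟨hqe, hqE⟩)

end HullStage

/-- A set is Alster if every family of `Gδ` sets which captures each of its compact subsets by a
single member has a countable subfamily covering it. -/
def IsAlster {X : Type*} [TopologicalSpace X] (E : Set X) : Prop :=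
  ∀ 𝒢 : Set (Set X), (∀ G ∈ 𝒢, IsGδ G) → (∀ C ⊆ E, IsCompact C → ∃ G ∈ 𝒢, C ⊆ G) →
    ∃ 𝒞 ⊆ 𝒢, 𝒞.Countable ∧ E ⊆ ⋃₀ 𝒞

section Alster

variable {I : Type u} [LinearOrder I] [∀ i : I, Countable (Iio i)] {K : Type} [TopologicalSpace K]
  [CompactSpace K]

theorem mk_setOf_isClosed_exists_isCylinder_Iio_le [SecondCountableTopology K] (hI : 𝔠 ≤ #I) :
    #{F : Set (I → K) | IsClosed F ∧ ∃ γ, IsCylinder (Iio γ) F} ≤ #I := by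
  have hF : {F : Set (I → K) | IsClosed F ∧ ∃ γ, IsCylinder (Iio γ) F} =
      ⋃ γ, {F | IsClosed F ∧ IsCylinder (Iio γ) F} := by
    ext F
    simp
  rw [hF]
  calc _ ≤ #I * ⨆ γ : I, #{F : Set (I → K) | IsClosed F ∧ IsCylinder (Iio γ) F} := mk_iUnion_le _
    _ ≤ #I * #I := mul_le_mul_right
      (ciSup_le' fun γ => (mk_setOf_isClosed_isCylinder_le_continuum (to_countable _)).trans hI) _
    _ = #I := mul_eq_self (aleph0_le_continuum.trans hI)

variable [T2Space K]

theorem exists_isCylinder_Iio_subset [Uncountable I] {x : I → K} {G : Set (I → K)} (hG : IsGδ G)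
    (hx : x ∈ G) : ∃ F, IsClosed F ∧ (∃ γ, IsCylinder (Iio γ) F) ∧ x ∈ F ∧ F ⊆ G := by
  obtain ⟨r, hr, hrG⟩ := exists_countable_cylinderHull_singleton_subset hG hx
  obtain ⟨γ, hγ⟩ := exists_forall_lt_of_countable hr
  exact ⟨cylinderHull (Iio γ) {x}, isClosed_cylinderHull isClosed_singleton,
    ⟨γ, isCylinder_cylinderHull _ _⟩, subset_cylinderHull rfl, (cylinderHull_anti hγ _).trans hrG⟩

attribute [local instance] noMaxOrder_of_countable_Iio countableInterFilter_atTop_of_countable_Iio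

namespace ProductivelyLindelofSp

variable [SecondCountableTopology K] {E : Set (I → K)}

theorem isSigmaCompact_cylinderHull (hE : ProductivelyLindelofSp E) (hI : 𝔠 ≤ #I) (i : I) :
    IsSigmaCompact (cylinderHull (Iio i) E) :=
  _root_.isSigmaCompact_cylinderHull <|
    (hE.image (f := (Iio i).domRestrict) (by fun_prop)).isSigmaCompact hI

variable [WellFoundedLT I]

theorem exists_subset_hullStage (hE : ProductivelyLindelofSp E) (hI : 𝔠 ≤ #I)
    {e : I → Set (I → K)} (hclosed : ∀ α, IsClosed (e α))
    (hcyl : ∀ α, ∃ γ, IsCylinder (Iio γ) (e α)) (hcov : E ⊆ ⋃ α, e α)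
    (hcatch : ∀ P : I → Set (I → K), Antitone P → (∀ i, IsClosed (P i)) →
      (∀ i, ∃ γ, IsCylinder (Iio γ) (P i)) → ⋂ i, P i ⊆ E → ∃ i, P i ∈ range e) :
    ∃ δ, E ⊆ hullStage e E δ := by
  have : Uncountable I := aleph0_lt_mk_iff.1 (aleph0_lt_continuum.trans_le hI)
  refine hE.exists_subset_of_monotone hullStage_mono (fun δ => ?_) (fun x hx => ?_) fun C hC hCe =>
    exists_subset_hullStage_of_isClosed hE.isLindelof (hE.isSigmaCompact_cylinderHull hI)
      hclosed hcyl hcatch hC hCe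
  · obtain ⟨γ, hγ⟩ := exists_isCylinder_hullStage (E := E) hcyl δ
    exact hγ.compl.isLindelof (to_countable _)
  · obtain ⟨α, hα⟩ := mem_iUnion.1 (hcov hx)
    obtain ⟨δ, hαδ⟩ := exists_gt α
    exact mem_iUnion.2 ⟨δ, mem_biUnion hαδ ⟨hα, subset_cylinderHull hx⟩⟩

theorem isAlster (hE : ProductivelyLindelofSp E) (hI : 𝔠 ≤ #I) : IsAlster E := by
  intro 𝒢 h𝒢 hcapture
  have : Uncountable I := aleph0_lt_mk_iff.1 (aleph0_lt_continuum.trans_le hI)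
  let 𝓕 := {F : Set (I → K) | (IsClosed F ∧ ∃ γ, IsCylinder (Iio γ) F) ∧ ∃ G ∈ 𝒢, F ⊆ G}
  obtain ⟨G₀, hG₀, -⟩ := hcapture ∅ (empty_subset E) isCompact_empty
  have : Nonempty 𝓕 := ⟨⟨∅, ⟨isClosed_empty, Classical.arbitrary I, fun _ _ _ => rfl⟩,
    G₀, hG₀, empty_subset G₀⟩⟩
  obtain ⟨e, he⟩ := exists_surjective_of_mk_le
    ((mk_le_mk_of_subset fun F (hF : F ∈ 𝓕) => hF.1).trans
      (mk_setOf_isClosed_exists_isCylinder_Iio_le hI))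
  have hrange : ∀ F ∈ 𝓕, F ∈ range fun α => (e α).1 := fun F hF =>
    (he ⟨F, hF⟩).imp fun _ => congrArg Subtype.val
  have hcov : E ⊆ ⋃ α, (e α).1 := fun x hx => by
    obtain ⟨G, hG, hxG⟩ := hcapture {x} (singleton_subset_iff.2 hx) isCompact_singleton
    obtain ⟨F, hF, hFcyl, hxF, hFG⟩ := exists_isCylinder_Iio_subset (h𝒢 G hG) (hxG rfl)
    obtain ⟨α, rfl⟩ := hrange F ⟨⟨hF, hFcyl⟩, G, hG, hFG⟩
    exact mem_iUnion.2 ⟨α, hxF⟩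
  obtain ⟨δ, hδ⟩ := hE.exists_subset_hullStage hI (fun α => (e α).2.1.1) (fun α => (e α).2.1.2)
    hcov fun P hP hPclosed hPcyl hPE => by
      obtain ⟨G, hG, hPG⟩ := hcapture _ hPE (isClosed_iInter hPclosed).isCompact
      obtain ⟨i, hi⟩ := (eventually_subset_of_iInter_subset_isGδ hP hPclosed (h𝒢 G hG) hPG).exists
      exact ⟨i, hrange (P i) ⟨⟨hPclosed i, hPcyl i⟩, G, hG, hi⟩⟩
  choose G hG heG using fun α => (e α).2.2
  refine ⟨G '' Iio δ, image_subset_iff.2 fun α _ => hG α, (to_countable _).image G, hδ.trans ?_⟩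
  rw [sUnion_image]
  exact biUnion_mono Subset.rfl fun α _ => inter_subset_left.trans (heG α)

end ProductivelyLindelofSp

end Alster

/-! ### Countable powers of Alster sets -/

theorem bar_induction {α : Type*} {P : ℕ → (ℕ → α) → Prop}
    (hP : ∀ n f g, (∀ i < n, f i = g i) → P n f → P n g) (hbar : ∀ f, ∃ n, P n f)
    (hstep : ∀ n f, (∀ a, P (n + 1) (Function.update f n a)) → P n f) (f : ℕ → α) : P 0 f := by
  by_contra hf
  have hext : ∀ n f, ∃ a, ¬P n f → ¬P (n + 1) (Function.update f n a) := fun n f => by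
    by_contra! h
    exact (h (f n)).1 (hstep n f fun a => (h a).2)
  choose a ha using hext
  let s : ℕ → ℕ → α := fun n => Nat.rec f (fun n g => Function.update g n (a n g)) n
  have hs : ∀ n, ¬P n (s n) := fun n => Nat.rec hf (fun n h => ha n (s n) h) n
  have hlim : ∀ n, ∀ i < n, s n i = a i (s i) := fun n => by
    induction n with
    | zero => exact fun i hi => absurd hi i.not_lt_zero
    | succ n ih =>
      intro i hi
      rcases (Nat.lt_succ_iff.1 hi).eq_or_lt with rfl | hin
      · exact Function.update_self ..
      · exact (Function.update_of_ne hin.ne ..).trans (ih i hin)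
  obtain ⟨n, hn⟩ := hbar fun i => a i (s i)
  exact hs n (hP n _ _ (fun i hi => (hlim n i hi).symm) hn)

theorem pi_nhdsSet_le_nhdsSet_pi {ι : Type*} {X : ι → Type*} [∀ i, TopologicalSpace (X i)]
    {C : ∀ i, Set (X i)} (hC : ∀ i, IsCompact (C i)) :
    Filter.pi (fun i => 𝓝ˢ (C i)) ≤ 𝓝ˢ (Set.univ.pi C) := by
  refine Filter.le_iff_ultrafilter.2 fun 𝒰 h𝒰 => ?_
  have hlim : ∀ i, ∃ x ∈ C i, ↑(𝒰.map (Function.eval i)) ≤ 𝓝 x := fun i => by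
    have hle : ↑(𝒰.map (Function.eval i)) ≤ 𝓝ˢ (C i) := (Filter.tendsto_eval_pi _ i).mono_left h𝒰
    by_contra! hnot
    refine Ultrafilter.disjoint_iff_not_le.1 (.symm ?_) hle
    exact (hC i).disjoint_nhdsSet_left.2 fun x hx =>
      (Ultrafilter.disjoint_iff_not_le.2 (hnot x hx)).symm
  choose x hxC hx using hlim
  exact (tendsto_pi_nhds.2 hx).trans (nhds_le_nhdsSet fun i _ => hxC i)

theorem exists_isOpen_setOf_forall_lt_subset {X : ℕ → Type*} [∀ i, TopologicalSpace (X i)]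
    {C : ∀ i, Set (X i)} (hC : ∀ i, IsCompact (C i)) {O : Set (∀ i, X i)} (hO : IsOpen O)
    (hCO : Set.univ.pi C ⊆ O) :
    ∃ (n : ℕ) (V : ∀ i, Set (X i)), (∀ i, IsOpen (V i)) ∧ (∀ i, C i ⊆ V i) ∧
      {x | ∀ i < n, x i ∈ V i} ⊆ O := by
  obtain ⟨s, V, hV, hVO⟩ :=
    Filter.mem_pi'.1 (pi_nhdsSet_le_nhdsSet_pi hC (hO.mem_nhdsSet.2 hCO))
  obtain ⟨n, hn⟩ := s.exists_nat_subset_range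
  exact ⟨n, fun i => interior (V i), fun i => isOpen_interior,
    fun i => subset_interior_iff_mem_nhdsSet.2 (hV i),
    fun x hx => hVO fun i hi => interior_subset (hx i (Finset.mem_range.1 (hn hi)))⟩

namespace IsAlster

variable {X : Type*} [TopologicalSpace X] {E : Set X}

theorem exists_countable_subset_biUnion (hE : IsAlster E) {ι : Type*} {G : ι → Set X}
    (hG : ∀ i, IsGδ (G i)) (hcapture : ∀ C ⊆ E, IsCompact C → ∃ i, C ⊆ G i) :
    ∃ t : Set ι, t.Countable ∧ E ⊆ ⋃ i ∈ t, G i := by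
  obtain ⟨𝒞, h𝒞, hcount, hcov⟩ := hE (range G) (forall_mem_range.2 hG) fun C hC hc =>
    exists_range_iff.2 (hcapture C hC hc)
  obtain ⟨t, rfl, ht⟩ := exists_image_eq_injOn_of_subset_range h𝒞
  exact ⟨t, countable_of_injective_of_countable_image ht hcount, hcov.trans_eq (sUnion_image G t)⟩

theorem isLindelof_pi_nat (hE : IsAlster E) : IsLindelof (Set.univ.pi fun _ : ℕ => E) := by
  refine isLindelof_of_countable_subcover fun {ι} W hW hcov => ?_
  let P : ℕ → (ℕ → {C : Set X // C ⊆ E ∧ IsCompact C}) → Prop := fun n f =>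
    ∃ G : ℕ → Set X, (∀ i < n, IsGδ (G i) ∧ (f i).1 ⊆ G i) ∧ ∃ t : Set ι, t.Countable ∧
      ∀ x ∈ Set.univ.pi fun _ => E, (∀ i < n, x i ∈ G i) → x ∈ ⋃ j ∈ t, W j
  have hbar : ∀ f, ∃ n, P n f := fun f => by
    obtain ⟨t, ht⟩ := (isCompact_univ_pi fun i => (f i).2.2).elim_finite_subcover W hW
      ((pi_mono fun i _ => (f i).2.1).trans hcov)
    obtain ⟨n, V, hV, hfV, hVt⟩ := exists_isOpen_setOf_forall_lt_subset (fun i => (f i).2.2)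
      (isOpen_biUnion fun j _ => hW j) ht
    exact ⟨n, V, fun i _ => ⟨(hV i).isGδ, hfV i⟩, t, t.countable_toSet, fun x _ hx => hVt hx⟩
  have hstep : ∀ n f, (∀ C, P (n + 1) (Function.update f n C)) → P n f := fun n f h => by
    choose G hG t ht htcov using h
    obtain ⟨r, hr, hrcov⟩ := hE.exists_countable_subset_biUnion
      (fun C => (hG C n n.lt_succ_self).1)
      fun C hCE hC => ⟨⟨C, hCE, hC⟩, by simpa using (hG ⟨C, hCE, hC⟩ n n.lt_succ_self).2⟩
    refine ⟨fun i => ⋂ C ∈ r, G C i, fun i hi => ?_, ⋃ C ∈ r, t C,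
      hr.biUnion fun C _ => ht C, fun x hxE hx => ?_⟩
    · have hGi := fun C => hG C i (hi.trans n.lt_succ_self)
      simp only [Function.update_of_ne hi.ne] at hGi
      exact ⟨.biInter hr fun C _ => (hGi C).1, subset_iInter₂ fun C _ => (hGi C).2⟩
    · obtain ⟨C, hCr, hxC⟩ := mem_iUnion₂.1 (hrcov (hxE n trivial))
      exact biUnion_mono (subset_biUnion_of_mem hCr) (fun _ _ => Subset.rfl) <| htcov C x hxE <|
        Nat.forall_lt_succ_right.2 ⟨fun i hi => mem_iInter₂.1 (hx i hi) C hCr, hxC⟩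
  obtain ⟨G, -, t, ht, htcov⟩ := bar_induction (P := P)
    (fun n f g hfg ⟨G, hG, h⟩ => ⟨G, fun i hi => hfg i hi ▸ hG i hi, h⟩) hbar hstep
    fun _ => ⟨∅, empty_subset E, isCompact_empty⟩
  exact ⟨t, ht, fun x hx => htcov x hx fun i hi => absurd hi i.not_lt_zero⟩

end IsAlster

theorem countable_Iio_toType_ord_aleph_one (i : (ℵ₁ : Cardinal.{u}).ord.ToType) :
    Countable (Iio i) := by
  have h : #(Iio i) < ℵ₁ := by simpa using mk_Iio_lt i (by simp)
  exact mk_le_aleph0_iff.1 (lt_aleph_one_iff.1 h)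

attribute [local instance] countable_Iio_toType_ord_aleph_one

theorem ProductivelyLindelofSp.isLindelof_pi_nat (hCH : 𝔠 = (ℵ₁ : Cardinal.{u})) {J : Type u}
    [Nonempty J] (hJ : #J ≤ 𝔠) {K : Type} [TopologicalSpace K] [CompactSpace K] [T2Space K]
    [SecondCountableTopology K] {E : Set (J → K)} (hE : ProductivelyLindelofSp E) :
    IsLindelof (Set.univ.pi fun _ : ℕ => E) := by
  let I := (ℵ₁ : Cardinal.{u}).ord.ToType
  have hI : 𝔠 = #I := hCH.trans (mk_ord_toType _).symm
  obtain ⟨e, he⟩ := exists_surjective_of_mk_le (hJ.trans_eq hI)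
  have hE' : ProductivelyLindelofSp ((fun x : J → K => x ∘ e) '' E) := hE.image (by fun_prop)
  have hlind := (hE'.isAlster hI.le).isLindelof_pi_nat.image
    (f := Pi.map fun _ x => x ∘ Function.surjInv he) (by fun_prop)
  rw [piMap_image_univ_pi] at hlind
  simpa only [image_image, Function.comp_assoc, Function.comp_surjInv he, Function.comp_id,
    image_id'] using hlind

/-! ### Reflection to closed subspaces of size continuum -/

theorem exists_finset_forall_continuousMap_lt_one {ι : Type*} {X : ι → Type*}
    [∀ i, TopologicalSpace (X i)] [∀ i, CompletelyRegularSpace (X i)] {x : ∀ i, X i}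
    {U : Set (∀ i, X i)} (hU : IsOpen U) (hx : x ∈ U) :
    ∃ (s : Finset ι) (g : ∀ i, C(X i, unitInterval)), (∀ i, g i (x i) = 0) ∧
      {y | ∀ i ∈ s, g i (y i) < 1} ⊆ U := by
  obtain ⟨s, u, hu, hsU⟩ := isOpen_pi_iff.1 hU x hx
  have hsep : ∀ i, ∃ g : C(X i, unitInterval), g (x i) = 0 ∧ (i ∈ s → {z | g z < 1} ⊆ u i) :=
    fun i => by
      by_cases hi : i ∈ s
      · obtain ⟨g, hg, hgx, hgu⟩ := CompletelyRegularSpace.completely_regular_isOpen (x i) (u i)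
          (hu i hi).1 (hu i hi).2
        exact ⟨⟨g, hg⟩, hgx, fun _ z hz => not_not.1 fun hzu => (hz : g z < 1).ne (hgu hzu)⟩
      · exact ⟨0, rfl, fun h => absurd h hi⟩
  choose g hgx hgu using hsep
  exact ⟨s, g, hgx, fun y hy => hsU fun i hi => hgu i hi (hy i hi)⟩

theorem ProductivelyLindelofSp.lindelofSpace_nat_pi_of_mk_le (hCH : 𝔠 = (ℵ₁ : Cardinal.{u}))
    {X : Type u} [TopologicalSpace X] (hX : ProductivelyLindelofSp X) (hcard : #X ≤ 𝔠) :
    LindelofSpace (ℕ → X) := by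
  rcases isEmpty_or_nonempty X with _ | _
  · infer_instance
  obtain ⟨_, _⟩ := engLindelofSp_iff.1 hX.engLindelofSp
  refine ⟨isLindelof_of_countable_subcover fun {ι} W hW hcov => ?_⟩
  have hbox : ∀ x : ℕ → X, ∃ (j : ι) (s : Finset ℕ) (g : ℕ → C(X, unitInterval)),
      (∀ i, g i (x i) = 0) ∧ {y | ∀ i ∈ s, g i (y i) < 1} ⊆ W j := fun x => by
    obtain ⟨j, hj⟩ := mem_iUnion.1 (hcov (mem_univ x))
    exact ⟨j, exists_finset_forall_continuousMap_lt_one (hW j) hj⟩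
  choose j s g hgx hgW using hbox
  let F : X → (ℕ → X) × ℕ → unitInterval := fun z p => g p.1 p.2 z
  have hF : ProductivelyLindelofSp (range F) :=
    hX.of_surjective (f := rangeFactorization F) (by fun_prop) rangeFactorization_surjective
  have hJ : #((ℕ → X) × ℕ) ≤ 𝔠 := by
    calc #((ℕ → X) × ℕ) = #X ^ ℵ₀ * ℵ₀ := by simp
      _ ≤ 𝔠 ^ ℵ₀ * ℵ₀ := by gcongr; exact power_le_power_right hcard
      _ = 𝔠 := by rw [continuum_power_aleph0, continuum_mul_aleph0]
  let O : (ℕ → X) → Set (ℕ → (ℕ → X) × ℕ → unitInterval) :=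
    fun x => {z | ∀ i ∈ s x, z i (x, i) < 1}
  have hO : ∀ x, IsOpen (O x) := fun x => by
    simp only [O, ofPred_forall]
    exact isOpen_biInter_finset fun i _ => isOpen_lt (by fun_prop) continuous_const
  have hOcov : (Set.univ.pi fun _ => range F) ⊆ ⋃ x, O x := fun z hz => by
    choose y hy using fun n => hz n (mem_univ n)
    refine mem_iUnion.2 ⟨y, fun i _ => ?_⟩
    rw [← hy i]
    exact (hgx y i).trans_lt zero_lt_one
  obtain ⟨t, ht, htcov⟩ := (hF.isLindelof_pi_nat hCH hJ).elim_countable_subcover O hO hOcov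
  refine ⟨j '' t, ht.image j, fun y _ => ?_⟩
  obtain ⟨x, hxt, hx⟩ := mem_iUnion₂.1 (htcov fun n _ => mem_range_self (y n))
  exact mem_biUnion (mem_image_of_mem j hxt) (hgW x hx)

theorem exists_nonempty_mk_le_continuum_forall_mem {X : Type u} [Nonempty X]
    (op : ℕ → (ℕ → X) → X) :
    ∃ Y : Set X, Y.Nonempty ∧ #Y ≤ 𝔠 ∧ ∀ n a, (∀ i, a i ∈ Y) → op n a ∈ Y := by
  -- `Y` is the set of values of the infinitary terms in the `op n` and one constant, `none`.
  let β : Option ℕ → Type := fun o => {_n : ℕ // o.isSome}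
  let ev : WType β → X := WType.elim X fun
    | ⟨none, _⟩ => Classical.arbitrary X
    | ⟨some n, a⟩ => op n fun i => a ⟨i, rfl⟩
  have hcard : #(WType β) ≤ 𝔠 := by
    refine WType.cardinalMk_le_of_le ?_
    calc sum (fun o => 𝔠 ^ #(β o)) ≤ sum fun _ : Option ℕ => 𝔠 := sum_le_sum _ _ fun o =>
          (power_le_power_left continuum_ne_zero mk_le_aleph0).trans_eq continuum_power_aleph0
      _ = 𝔠 := by simp
  refine ⟨range ev, ⟨ev ⟨none, fun b => nomatch b.2⟩, mem_range_self _⟩, ?_, fun n a ha => ?_⟩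
  · have := (mk_range_le_lift (f := ev)).trans (lift_le.2 hcard)
    simpa using this
  · choose w hw using ha
    exact ⟨⟨some n, fun b => w b.1⟩, congrArg (op n) (funext hw)⟩

theorem exists_isClosed_mk_le_continuum_forall_mem {X : Type u} [TopologicalSpace X] [T2Space X]
    [SequentialSpace X] [Nonempty X] (op : ℕ → (ℕ → X) → X) :
    ∃ Y : Set X, IsClosed Y ∧ Y.Nonempty ∧ #Y ≤ 𝔠 ∧ ∀ n a, (∀ i, a i ∈ Y) → op n a ∈ Y := by
  obtain ⟨Y, hne, hcard, hY⟩ := exists_nonempty_mk_le_continuum_forall_mem (X := X) fun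
    | 0 => Filter.atTop.limUnder
    | n + 1 => op n
  have hseq : IsSeqClosed Y := fun a p ha hp => hp.limUnder_eq ▸ hY 0 a ha
  exact ⟨Y, hseq.isClosed, hne, hcard, fun n => hY (n + 1)⟩

theorem exists_isClosed_mk_le_continuum_reflecting_covers {X : Type u} [TopologicalSpace X]
    [T2Space X] [SequentialSpace X] [Nonempty X] (N : (ℕ → X) → Set (ℕ → X)) :
    ∃ Y : Set X, IsClosed Y ∧ #Y ≤ 𝔠 ∧ ∀ R : Set (ℕ → X), R.Countable →
      R ⊆ Set.univ.pi (fun _ => Y) → Set.univ.pi (fun _ => Y) ⊆ ⋃ x ∈ R, N x →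
        ⋃ x ∈ R, N x = Set.univ := by
  -- `a` codes countably many centres; `m a` is a point outside all their neighbourhoods, if any.
  let m : (ℕ → X) → ℕ → X := fun a =>
    Classical.epsilon fun y => ∀ k, y ∉ N fun i => a (Nat.pair k i)
  obtain ⟨Y, hclosed, ⟨y₀, hy₀⟩, hcard, hY⟩ :=
    exists_isClosed_mk_le_continuum_forall_mem fun n a => m a n
  refine ⟨Y, hclosed, hcard, fun R hR hRY hcov => ?_⟩
  obtain ⟨x₀, hx₀, -⟩ := mem_iUnion₂.1 (hcov (show (fun _ => y₀) ∈ _ from fun _ _ => hy₀))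
  obtain ⟨x, rfl⟩ := hR.exists_eq_range ⟨x₀, hx₀⟩
  by_contra hne
  obtain ⟨z, hz⟩ := (ne_univ_iff_exists_notMem _).1 hne
  let a : ℕ → X := fun n => x n.unpair.1 n.unpair.2
  have ha : ∀ k, (fun i => a (Nat.pair k i)) = x k := fun k => by simp [a]
  have haY : ∀ n, a n ∈ Y := fun n => hRY (mem_range_self _) _ (mem_univ _)
  obtain ⟨_, ⟨k, rfl⟩, hk⟩ := mem_iUnion₂.1 (hcov (show m a ∈ _ from fun n _ => hY n a haY))
  have hma : ∀ k, m a ∉ N fun i => a (Nat.pair k i) :=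
    Classical.epsilon_spec (p := fun y => ∀ k, y ∉ N fun i => a (Nat.pair k i))
      ⟨z, fun k hzk => hz (mem_biUnion (mem_range_self k) (ha k ▸ hzk))⟩
  exact hma k (ha k ▸ hk)

theorem ProductivelyLindelofSp.lindelofSpace_nat_pi (hCH : 𝔠 = (ℵ₁ : Cardinal.{u}))
    {X : Type u} [TopologicalSpace X] [SequentialSpace X] (hX : ProductivelyLindelofSp X) :
    LindelofSpace (ℕ → X) := by
  rcases isEmpty_or_nonempty X with _ | _
  · infer_instance
  obtain ⟨_, _⟩ := engLindelofSp_iff.1 hX.engLindelofSp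
  refine ⟨isLindelof_of_countable_subcover fun {ι} W hW hcov => ?_⟩
  choose j hj using fun x => mem_iUnion.1 (hcov (mem_univ x))
  obtain ⟨Y, hclosed, hcard, hY⟩ :=
    exists_isClosed_mk_le_continuum_reflecting_covers fun x => W (j x)
  have := (hX.of_isClosed hclosed).lindelofSpace_nat_pi_of_mk_le hCH hcard
  obtain ⟨t, ht, htcov⟩ := isLindelof_univ.elim_countable_subcover
    (fun w : ℕ → Y => {z : ℕ → Y | (fun n => (z n : X)) ∈ W (j fun n => w n)})
    (fun w => (hW _).preimage (by fun_prop)) fun w _ => mem_iUnion.2 ⟨w, hj fun n => w n⟩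
  let R : Set (ℕ → X) := (fun w n => (w n : X)) '' t
  have hR : ⋃ x ∈ R, W (j x) = Set.univ := by
    refine hY R (ht.image _) ?_ fun z hz => ?_
    · rintro _ ⟨w, -, rfl⟩ n -
      exact (w n).2
    · obtain ⟨w, hw, hzw⟩ := mem_iUnion₂.1 (htcov (mem_univ fun n => ⟨z n, hz n (mem_univ n)⟩))
      exact mem_biUnion (mem_image_of_mem _ hw) hzw
  exact ⟨j '' R, (ht.image _).image j, by rw [biUnion_image, hR]⟩

theorem continuum_eq_aleph_one_change_universe (h : Cardinal.continuum.{v} = Cardinal.aleph 1) :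
    𝔠 = (ℵ₁ : Cardinal.{u}) := by
  refine lift_injective.{v, u} ?_
  simpa using congrArg lift.{u, v} h

/-- Under CH, every productively Lindelöf sequential space is
powerfully Lindelöf. -/
theorem stmt2 (hCH : Cardinal.continuum = Cardinal.aleph 1)
    (X : Type u) [TopologicalSpace X] [SequentialSpace X]
    (hprod : ProductivelyLindelofSp X) :
    PowerfullyLindelofSp X := by
  obtain ⟨_, _⟩ := engLindelofSp_iff.1 hprod.engLindelofSp
  exact engLindelofSp_iff.2
    ⟨inferInstance, hprod.lindelofSpace_nat_pi (continuum_eq_aleph_one_change_universe hCH)⟩
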